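/- Let R be a left Noetherian ring. The following are equivalent: (1) R has a left Artinian left quotient ring Q = C⁻¹R; (2) R is n-reflective (i.e. C' = C) and the following hold: (a) R̄ is a left Goldie ring, (b) n is a nilpotent ideal, (d) for every 1 ≤ i ≤ ν the left R̄-module f_i contains no infinite direct sum of nonzero submodules, and (e) for every c̄ ∈ C̄ the right multiplication map f_i → f_i, f ↦ f·c̄, is injective. -/

import Mathlib

open Function

universe u v

/-- A regular element of a ring: a two-sided non-zero-divisor. -/
def IsRegElem {R : Type*} [Ring R] (c : R) : Prop :=
  (∀ x : R, c * x = 0 → x = 0) ∧ (∀ x : R, x * c = 0 → x = 0)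

/-- The set `C` of regular elements of a ring. -/
def regSet (R : Type*) [Ring R] : Set R := {c : R | IsRegElem c}

/-- A (left) ideal is two-sided. -/
def Ideal.IsTwoSidedNC {R : Type*} [Ring R] (I : Ideal R) : Prop :=
  ∀ a ∈ I, ∀ r : R, a * r ∈ I

/-- A prime (two-sided) ideal of a possibly noncommutative ring. -/
def Ideal.IsPrimeNC {R : Type*} [Ring R] (P : Ideal R) : Prop :=
  P ≠ ⊤ ∧ P.IsTwoSidedNC ∧ ∀ a b : R, (∀ r : R, a * r * b ∈ P) → a ∈ P ∨ b ∈ P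

/-- The prime radical `n` of a ring: the intersection of all prime ideals. -/
def primeRadical (R : Type*) [Ring R] : Ideal R := sInf {P : Ideal R | P.IsPrimeNC}

/-- `n` is a nilpotent ideal. -/
def IsNilpotentIdeal {R : Type*} [Ring R] (I : Ideal R) : Prop := ∃ k : ℕ, I ^ (k + 1) = ⊥

/-- `φ : R →+* Q` realizes `Q` as a left quotient ring `C⁻¹R` of `R`:  `R` embeds in `Q`,
every regular element of `R` becomes invertible in `Q`, and every element of `Q` has the
form `(φ c)⁻¹ * (φ r)` with `c` regular. -/
structure IsLeftQuotRing {R : Type u} {Q : Type v} [Ring R] [Ring Q] (φ : R →+* Q) : Prop where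
  inj : Function.Injective φ
  isUnit : ∀ c : R, IsRegElem c → IsUnit (φ c)
  denom : ∀ q : Q, ∃ c r : R, IsRegElem c ∧ φ c * q = φ r

/-- Data of a left quotient ring of `R`. -/
structure LeftQuotData (R : Type u) [Ring R] : Type (u + 1) where
  Q : Type u
  [instQ : Ring Q]
  φ : R →+* Q
  quot : IsLeftQuotRing φ

attribute [instance] LeftQuotData.instQ

/-- `R` has a left Artinian left quotient ring `Q = C⁻¹R`. -/
def HasArtinianLeftQuot (R : Type u) [Ring R] : Prop :=
  ∃ d : LeftQuotData R, IsArtinianRing d.Q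

/-- A subset of a ring is a left annihilator. -/
def IsLeftAnnihilatorSet {R : Type*} [Ring R] (A : Set R) : Prop :=
  ∃ S : Set R, A = {r : R | ∀ s ∈ S, r * s = 0}

/-- The ascending chain condition on left annihilators. -/
def ACCLeftAnnihilators (R : Type*) [Ring R] : Prop :=
  ∀ f : ℕ → Set R, (∀ i, IsLeftAnnihilatorSet (f i)) → (∀ i j, i ≤ j → f i ⊆ f j) →
    ∃ N, ∀ k, N ≤ k → f k = f N

/-- The module `M` contains no infinite direct sum of nonzero submodules. -/
def NoInfiniteIndepFamily (R : Type*) (M : Type*) [Ring R] [AddCommGroup M] [Module R M] : Prop :=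
  ¬ ∃ f : ℕ → Submodule R M, (∀ i, f i ≠ ⊥) ∧ iSupIndep f

/-- A left Goldie ring: ACC on left annihilators and no infinite direct sums of nonzero
left ideals. -/
def IsLeftGoldie (R : Type*) [Ring R] : Prop :=
  ACCLeftAnnihilators R ∧ NoInfiniteIndepFamily R R

/-- The subquotient `n^i/n^{i+1}` of `R` determined by the prime radical `n`. -/
abbrev grPiece (R : Type*) [Ring R] (i : ℕ) :=
  ↥(primeRadical R ^ i) ⧸
    (Submodule.comap (primeRadical R ^ i : Ideal R).subtype (primeRadical R ^ (i + 1)))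

/-- The class of `x ∈ n^i` in `n^i/n^{i+1}`. -/
def grMk {R : Type*} [Ring R] (i : ℕ) (x : R) (hx : x ∈ primeRadical R ^ i) : grPiece R i :=
  Submodule.Quotient.mk ⟨x, hx⟩

/-- The `C̄`-torsion submodule `τ_i` of `n^i/n^{i+1}` (take the span, which coincides with the
set of torsion elements whenever the latter is a submodule, e.g. when `C̄` is a left Ore set);
here `C̄` is represented through `π : R → R̄` as `{c : R | IsRegElem (π c)}`. -/
def tauSub {R : Type u} {Rbar : Type v} [Ring R] [Ring Rbar] (π : R →+* Rbar) (i : ℕ) :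
    Submodule R (grPiece R i) :=
  Submodule.span R {u : grPiece R i | ∃ c : R, IsRegElem (π c) ∧ c • u = 0}

/-- The `C̄`-torsionfree module `f_i = (n^i/n^{i+1})/τ_i`. -/
abbrev fMod {R : Type u} {Rbar : Type v} [Ring R] [Ring Rbar] (π : R →+* Rbar) (i : ℕ) :=
  grPiece R i ⧸ tauSub π i

/-- The class of `x ∈ n^i` in `f_i`. -/
def fMk {R : Type u} {Rbar : Type v} [Ring R] [Ring Rbar] (π : R →+* Rbar) (i : ℕ) (x : R)
    (hx : x ∈ primeRadical R ^ i) : fMod π i :=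
  Submodule.Quotient.mk (grMk i x hx)

/-- The subset `C⁻¹K = {(φ c)⁻¹ (φ a) : c ∈ C, a ∈ K}` of a left quotient ring. -/
def locSet {R : Type u} {Q : Type v} [Ring R] [Ring Q] (φ : R →+* Q) (K : Ideal R) : Set Q :=
  {q : Q | ∃ c a : R, IsRegElem c ∧ a ∈ K ∧ φ c * q = φ a}

/-- A subset of a ring is a left Ore set (multiplicatively closed and satisfying the left
Ore condition). -/
def IsLeftOreSubset {A : Type*} [Ring A] (S : Set A) : Prop :=
  (1 : A) ∈ S ∧ (∀ s ∈ S, ∀ t ∈ S, s * t ∈ S) ∧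
    ∀ s ∈ S, ∀ a : A, ∃ t ∈ S, ∃ b : A, t * a = b * s

/-- A left denominator set. -/
def IsLeftDenominatorSet {A : Type*} [Ring A] (S : Set A) : Prop :=
  IsLeftOreSubset S ∧ ∀ a : A, ∀ s ∈ S, a * s = 0 → ∃ t ∈ S, t * a = 0

/-! Write `n` for the prime radical and `C'` for the set of elements that are regular modulo `n`.
By Goldie's theorem, essential left ideals of the semiprime left Noetherian ring `R/n` contain
regular elements. In a descending chain of submodules of a Noetherian module almost all inclusions
are essential, so Noetherian `R/n`-modules are Artinian up to torsion; as `n` is nilpotent,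
Noetherian `R`-modules are Artinian up to `C'`-torsion. Applied to `R ⊇ Rc ⊇ Rc² ⊇ ⋯` with `c`
right cancellable, this makes `R/Rc` a `C'`-torsion module, which is the left Ore condition.
Hence, if elements of `C'` are regular, the left quotient ring exists, and it is Artinian because
it has no torsion to neglect.

Conversely, in an Artinian left quotient ring `Q` the left ideals `Q nⁱ` are two-sided, so `Q n`
is nil. For `c ∈ C'`, right multiplication by `c` on `Q / Q n` is injective, hence surjective, so
`c` is a unit modulo nilpotent elements and therefore a unit of `Q`. -/

open scoped nonZeroDivisors
open Filter

/-! ### Essential submodules -/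

/-- Essentiality, stated for an element of an ordered set with least element so that it can be used
for left ideals and for submodules alike: every element disjoint from `a` vanishes. -/
def IsEssential {α : Type*} [PartialOrder α] [OrderBot α] (a : α) : Prop :=
  ∀ b, Disjoint a b → b = ⊥

theorem IsEssential.mono {α : Type*} [PartialOrder α] [OrderBot α] {a b : α}
    (ha : IsEssential a) (hab : a ≤ b) : IsEssential b :=
  fun c hbc => ha c (hbc.mono_left hab)

theorem eventually_eq_bot_of_disjoint_succ {α : Type*} [Lattice α] [IsModularLattice α]
    [OrderBot α] [WellFoundedGT α] {K : ℕ → α} (hK : Antitone K) :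
    ∀ᶠ k in atTop, ∀ b ≤ K k, Disjoint (K (k + 1)) b → b = ⊥ := by
  -- An element `a` maximal among those disjoint from some `K N` absorbs every such `b`.
  obtain ⟨a, ⟨N, haN⟩, hmax⟩ := exists_maximal_of_wellFoundedGT (fun a => ∃ k, Disjoint a (K k))
    ⟨⊥, 0, disjoint_bot_left⟩
  filter_upwards [eventually_ge_atTop N] with k hk b hb hKb
  have hak : Disjoint a (K k) := haN.mono_right (hK hk)
  have hsup : Disjoint (a ⊔ b) (K (k + 1)) :=
    hKb.symm.disjoint_sup_left_of_disjoint_sup_right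
      (hak.mono_right (sup_le hb (hK k.le_succ)))
  have hba : b ≤ a := le_sup_right.trans (hmax ⟨k + 1, hsup⟩ le_sup_left)
  exact disjoint_self.1 (hak.mono hba hb)

section Essential

variable {R M N : Type*} [Ring R] [AddCommGroup M] [Module R M] [AddCommGroup N] [Module R N]

theorem IsEssential.comap {E : Submodule R N} (hE : IsEssential E) (f : M →ₗ[R] N) :
    IsEssential (E.comap f) := by
  intro L hL
  have hmap : L.map f = ⊥ := hE _ <| Submodule.disjoint_def.2 <| by
    rintro _ hx ⟨x, hxL, rfl⟩
    rw [Submodule.disjoint_def.1 hL x hx hxL, map_zero]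
  have hle : L ≤ E.comap f := Submodule.map_le_iff_le_comap.1 (hmap ▸ bot_le)
  exact disjoint_self.1 (hL.mono_left hle)

theorem isEssential_range_of_injective [IsNoetherian R M] {f : M →ₗ[R] M} (hf : Injective f) :
    IsEssential f.range := by
  intro L hL
  obtain ⟨k, hk⟩ := (eventually_eq_bot_of_disjoint_succ f.iterateRange.monotone.dual_right).exists
  have hinj : Injective (f ^ k) := Module.End.iterate_injective hf k
  have hrange : (f ^ (k + 1)).range = f.range.map (f ^ k) := by
    rw [pow_succ, Module.End.mul_eq_comp, LinearMap.range_comp]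
  refine Submodule.map_injective_of_injective hinj
    ((hk _ LinearMap.map_le_range ?_).trans (Submodule.map_bot _).symm)
  change Disjoint (f ^ (k + 1)).range (L.map (f ^ k))
  exact hrange ▸ Submodule.disjoint_map hinj hL

theorem isEssential_span_singleton {R : Type*} [Ring R] [IsNoetherianRing R] {c : R}
    (hc : c ∈ nonZeroDivisorsRight R) : IsEssential (Ideal.span {c}) := by
  rw [Ideal.span, ← LinearMap.range_toSpanSingleton]
  exact isEssential_range_of_injective ((injective_iff_map_eq_zero _).2 hc)

end Essential

/-! ### Goldie's theorem for semiprime left Noetherian rings -/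

theorem eventually_disjoint_span_torsionOf_pow {S : Type*} [Ring S] [IsNoetherianRing S] (y : S) :
    ∀ᶠ k in atTop, Disjoint (Ideal.span {y ^ k}) (Ideal.torsionOf S S (y ^ k)) := by
  have hpow (k : ℕ) : (LinearMap.toSpanSingleton S S y : Module.End S S) ^ k =
      LinearMap.toSpanSingleton S S (y ^ k) := by
    induction k with
    | zero => ext; simp
    | succ k ih => ext; simp [pow_succ, pow_succ' y, ih]
  filter_upwards [Module.End.eventually_disjoint_ker_pow_range_pow
    (LinearMap.toSpanSingleton S S y)] with k hk
  rw [hpow, LinearMap.range_toSpanSingleton] at hk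
  exact hk.symm

theorem torsionOf_le_torsionOf_pow {S : Type*} [Ring S] {y : S} {k : ℕ} (hk : k ≠ 0) :
    Ideal.torsionOf S S y ≤ Ideal.torsionOf S S (y ^ k) := fun r hr => by
  rw [Ideal.mem_torsionOf_iff, smul_eq_mul] at hr ⊢
  rw [← mul_pow_sub_one hk, ← mul_assoc, hr, zero_mul]

theorem disjoint_sup_span_torsionOf_add {S : Type*} [Ring S] {L : Ideal S} {a b : S} (haL : a ∈ L)
    (hba : b ∈ Ideal.torsionOf S S a) (ha : Disjoint L (Ideal.torsionOf S S a))
    (hb : Disjoint (Ideal.span {b}) (Ideal.torsionOf S S b)) :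
    Disjoint (L ⊔ Ideal.span {b}) (Ideal.torsionOf S S (a + b)) := by
  rw [Submodule.disjoint_def] at ha hb ⊢
  rintro _ hx hxab
  obtain ⟨l, hl, _, hs, rfl⟩ := Submodule.mem_sup.1 hx
  obtain ⟨s, rfl⟩ := Ideal.mem_span_singleton'.1 hs
  simp only [Ideal.mem_torsionOf_iff, smul_eq_mul] at ha hb hba hxab
  have hsum : l * a + (l + s * b) * b = 0 := by
    rw [← hxab, mul_add, add_mul l _ a, mul_assoc s, hba, mul_zero, add_zero]
  have hla : l * a = 0 := by
    refine ha _ (L.mul_mem_left l haL) ?_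
    rw [eq_neg_of_add_eq_zero_left hsum, neg_mul, mul_assoc, hba, mul_zero, neg_zero]
  have hl0 : l = 0 := ha l hl hla
  rw [hl0, zero_add] at hsum ⊢
  exact hb _ hs (by rwa [zero_mul, zero_add] at hsum)

/-- Semiprimeness of a possibly noncommutative ring, in its elementwise form. -/
def IsSemiprimeRing (S : Type*) [Ring S] : Prop :=
  ∀ a : S, (∀ x, a * x * a = 0) → a = 0

namespace IsSemiprimeRing

variable {S : Type*} [Ring S] [IsNoetherianRing S]

theorem eq_zero_of_forall_isNilpotent_mul (hS : IsSemiprimeRing S) {a : S}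
    (ha : ∀ x, IsNilpotent (x * a)) : a = 0 := by
  -- Utumi's argument: choose a nonzero right multiple `b` of `a` with maximal left annihilator.
  by_contra hne
  obtain ⟨_, ⟨b, hb, ⟨y, rfl⟩, rfl⟩, hmax⟩ := exists_maximal_of_wellFoundedGT
    (fun I : Ideal S => ∃ b ≠ 0, a ∣ b ∧ Ideal.torsionOf S S b = I) ⟨_, a, hne, dvd_rfl, rfl⟩
  refine hb (hS _ fun x => ?_)
  have hnil : ∃ m, a * y * (x * (a * y)) ^ m = 0 := by
    obtain ⟨m, hm⟩ := ha (y * x)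
    refine ⟨m, ?_⟩
    rw [← mul_assoc x, mul_assoc a, ← mul_pow_mul, ← mul_assoc y, hm, zero_mul, mul_zero]
  obtain ⟨m, hm, hm'⟩ := Nat.exists_not_and_succ_of_not_zero_of_exists
    (p := fun m => a * y * (x * (a * y)) ^ m = 0) (by simpa using hb) hnil
  have hle := hmax ⟨_, hm, (dvd_mul_right a y).mul_right _, rfl⟩ fun r hr => by
    rw [Ideal.mem_torsionOf_iff, smul_eq_mul] at hr ⊢
    rw [← mul_assoc, hr, zero_mul]
  refine hle (x := a * y * x) ?_
  rw [Ideal.mem_torsionOf_iff, smul_eq_mul, ← hm', pow_succ']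
  simp only [mul_assoc]

theorem exists_disjoint_span_torsionOf (hS : IsSemiprimeRing S) {I : Ideal S} (hI : I ≠ ⊥) :
    ∃ b ∈ I, b ≠ 0 ∧ Disjoint (Ideal.span {b}) (Ideal.torsionOf S S b) := by
  obtain ⟨y, hyI, hy⟩ : ∃ y ∈ I, ¬ IsNilpotent y := by
    by_contra! hnil
    obtain ⟨y, hyI, hy⟩ := I.ne_bot_iff.1 hI
    exact hy (hS.eq_zero_of_forall_isNilpotent_mul fun x => hnil _ (I.mul_mem_left x hyI))
  obtain ⟨k, hk, hdisj⟩ :=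
    ((eventually_ne_atTop 0).and (eventually_disjoint_span_torsionOf_pow y)).exists
  exact ⟨y ^ k, I.pow_mem_of_mem hyI k (Nat.pos_of_ne_zero hk), fun h => hy ⟨k, h⟩, hdisj⟩

theorem eq_zero_of_isEssential_torsionOf (hS : IsSemiprimeRing S) {a : S}
    (ha : IsEssential (Ideal.torsionOf S S a)) : a = 0 := by
  refine hS.eq_zero_of_forall_isNilpotent_mul fun x => ?_
  have hxa : IsEssential (Ideal.torsionOf S S (x * a)) := by
    have hcomap : Ideal.torsionOf S S (x * a) =
        Submodule.comap (LinearMap.toSpanSingleton S S x) (Ideal.torsionOf S S a) := by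
      ext r
      simp [Ideal.mem_torsionOf_iff, mul_assoc]
    exact hcomap ▸ ha.comap _
  obtain ⟨k, hk, hdisj⟩ :=
    ((eventually_ne_atTop 0).and (eventually_disjoint_span_torsionOf_pow (x * a))).exists
  exact ⟨k, Ideal.span_singleton_eq_bot.1
    (hxa _ (hdisj.mono_right (torsionOf_le_torsionOf_pow hk)).symm)⟩

theorem mem_nonZeroDivisors_of_mem_nonZeroDivisorsRight (hS : IsSemiprimeRing S) {c : S}
    (hc : c ∈ nonZeroDivisorsRight S) : c ∈ S⁰ := by
  refine ⟨fun x hx => hS.eq_zero_of_isEssential_torsionOf ?_, hc⟩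
  refine (isEssential_span_singleton hc).mono ?_
  rwa [Ideal.span_singleton_le_iff_mem, Ideal.mem_torsionOf_iff, smul_eq_mul]

theorem exists_mem_nonZeroDivisors (hS : IsSemiprimeRing S) {E : Ideal S} (hE : IsEssential E) :
    ∃ c ∈ E, c ∈ S⁰ := by
  obtain ⟨L, ⟨hLE, a, haL, ha⟩, hmax⟩ := exists_maximal_of_wellFoundedGT
    (fun L : Ideal S => L ≤ E ∧ ∃ a ∈ L, Disjoint L (Ideal.torsionOf S S a))
    ⟨⊥, bot_le, 0, zero_mem _, disjoint_bot_left⟩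
  have htorsion : E ⊓ Ideal.torsionOf S S a = ⊥ := by
    by_contra hne
    obtain ⟨b, ⟨hbE, hba⟩, hb0, hb⟩ := hS.exists_disjoint_span_torsionOf hne
    have hmem : b ∈ Ideal.span {b} := Ideal.mem_span_singleton_self b
    have hbL : b ∈ L := hmax
      ⟨sup_le hLE ((Ideal.span_singleton_le_iff_mem _).2 hbE), a + b,
        add_mem (Ideal.mem_sup_left haL) (Ideal.mem_sup_right hmem),
        disjoint_sup_span_torsionOf_add haL hba ha hb⟩
      le_sup_left (Ideal.mem_sup_right hmem)
    exact hb0 (Submodule.disjoint_def.1 ha b hbL hba)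
  have hregular : a ∈ nonZeroDivisorsRight S := fun r hr => by
    have hbot : Ideal.torsionOf S S a = ⊥ := hE _ (disjoint_iff.2 htorsion)
    rwa [← Submodule.mem_bot S, ← hbot, Ideal.mem_torsionOf_iff]
  exact ⟨a, hLE haL, hS.mem_nonZeroDivisors_of_mem_nonZeroDivisorsRight hregular⟩

end IsSemiprimeRing

/-! ### The prime radical -/

instance primeRadical.isTwoSided (R : Type*) [Ring R] : (primeRadical R).IsTwoSided where
  mul_mem_of_left b ha := by
    rw [primeRadical, Submodule.mem_sInf] at ha ⊢
    exact fun P hP => hP.2.1 _ (ha P hP) b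

theorem exists_lt_mul_le_of_not_isPrimeNC {R : Type*} [Ring R] {I : Ideal R} [I.IsTwoSided]
    (hI : I ≠ ⊤) (hprime : ¬ I.IsPrimeNC) :
    ∃ A B : Ideal R, A.IsTwoSided ∧ B.IsTwoSided ∧ I < A ∧ I < B ∧ A * B ≤ I := by
  obtain ⟨a, b, hab, haI, hbI⟩ : ∃ a b : R, (∀ r, a * r * b ∈ I) ∧ a ∉ I ∧ b ∉ I := by
    by_contra! h
    exact hprime ⟨hI, fun x hx r => I.mul_mem_right r hx,
      fun a b hab => or_iff_not_imp_left.2 (h a b hab)⟩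
  have hB : (I ⊔ Ideal.span {b} * ⊤).IsTwoSided := ⟨fun r hx => by
    obtain ⟨y, hy, z, hz, rfl⟩ := Submodule.mem_sup.1 hx
    rw [add_mul]
    exact add_mem (Ideal.mem_sup_left (I.mul_mem_right r hy))
      (Ideal.mem_sup_right (Ideal.mul_mem_right r _ hz))⟩
  have hbB : b ∈ I ⊔ Ideal.span {b} * ⊤ := Ideal.mem_sup_right <| by
    simpa using Ideal.mul_mem_mul (Ideal.mem_span_singleton_self b) (trivial : (1 : R) ∈ ⊤)
  have haA : a ∈ I.colon (I ⊔ Ideal.span {b} * ⊤ : Ideal R) := by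
    refine Submodule.mem_colon.2 fun s hs => ?_
    obtain ⟨y, hy, z, hz, rfl⟩ := Submodule.mem_sup.1 hs
    clear hs
    rw [smul_eq_mul, mul_add]
    refine add_mem (I.mul_mem_left a hy) ?_
    induction hz using Submodule.mul_induction_on' with
    | mem_mul_mem m hm t _ =>
      obtain ⟨r, rfl⟩ := Ideal.mem_span_singleton'.1 hm
      rw [← mul_assoc, ← mul_assoc]
      exact I.mul_mem_right t (hab r)
    | add z _ w _ hz hw =>
      rw [mul_add]
      exact add_mem hz hw
  refine ⟨I.colon (I ⊔ Ideal.span {b} * ⊤ : Ideal R), _, inferInstance, hB,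
    SetLike.lt_iff_le_and_exists.2 ⟨Ideal.le_colon, a, haA, haI⟩,
    SetLike.lt_iff_le_and_exists.2 ⟨le_sup_left, b, hbB, hbI⟩,
    Ideal.mul_le.2 fun r hr s hs => Submodule.mem_colon.1 hr s hs⟩

theorem exists_primeRadical_pow_le {R : Type*} [Ring R] [IsNoetherianRing R] (I : Ideal R)
    [hI : I.IsTwoSided] : ∃ k, primeRadical R ^ k ≤ I := by
  induction I using IsNoetherian.induction generalizing hI with
  | hgt I ih =>
  by_cases htop : I = ⊤
  · exact ⟨0, htop ▸ le_top⟩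
  by_cases hprime : Ideal.IsPrimeNC I
  · exact ⟨1, by rw [Submodule.pow_one]; exact sInf_le hprime⟩
  obtain ⟨A, B, hA, hB, hIA, hIB, hAB⟩ := exists_lt_mul_le_of_not_isPrimeNC htop hprime
  obtain ⟨k, hk⟩ := ih A hIA
  obtain ⟨l, hl⟩ := ih B hIB
  exact ⟨k + l, (Ideal.IsTwoSided.pow_add ..).trans_le ((Ideal.mul_mono hk hl).trans hAB)⟩

theorem isNilpotentIdeal_primeRadical (R : Type*) [Ring R] [IsNoetherianRing R] :
    IsNilpotentIdeal (primeRadical R) := by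
  obtain ⟨k, hk⟩ := exists_primeRadical_pow_le (⊥ : Ideal R)
  exact ⟨k, le_bot_iff.1 ((Ideal.pow_le_pow_right k.le_succ).trans hk)⟩

theorem isSemiprimeRing_of_ker_eq_primeRadical {R S : Type*} [Ring R] [Ring S] {π : R →+* S}
    (hsurj : Surjective π) (hker : RingHom.ker π = primeRadical R) : IsSemiprimeRing S := by
  intro a ha
  obtain ⟨a, rfl⟩ := hsurj a
  rw [← RingHom.mem_ker, hker, primeRadical, Submodule.mem_sInf]
  refine fun P hP => or_self_iff.1 (hP.2.2 a a fun r => ?_)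
  have hmem : a * r * a ∈ primeRadical R := by
    rw [← hker, RingHom.mem_ker, map_mul, map_mul]
    exact ha _
  exact (sInf_le hP : primeRadical R ≤ P) hmem

/-! ### Descending chains modulo torsion -/

/-- The descending chain condition up to `S`-torsion: in every descending chain of submodules of
`M`, all but finitely many factors are `S`-torsion. -/
def IsArtinianModTorsion {R : Type*} [Ring R] (S : Submonoid R) (M : Type*) [AddCommGroup M]
    [Module R M] : Prop :=
  ∀ K : ℕ → Submodule R M, Antitone K →
    ∀ᶠ k in atTop, ∀ x ∈ K k, ∃ s ∈ S, s • x ∈ K (k + 1)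

namespace IsArtinianModTorsion

variable {R M : Type*} [Ring R] [AddCommGroup M] [Module R M] {S : Submonoid R}

theorem mono {T : Submonoid R} (h : IsArtinianModTorsion S M) (hST : S ≤ T) :
    IsArtinianModTorsion T M := fun K hK => by
  filter_upwards [h K hK] with k hk x hx
  exact (hk x hx).imp fun _ hs => ⟨hST hs.1, hs.2⟩

theorem of_quotient (P : Submodule R M) (hP : IsArtinianModTorsion S P)
    (hMP : IsArtinianModTorsion S (M ⧸ P)) : IsArtinianModTorsion S M := fun K hK => by
  filter_upwards [hP (fun k => (K k).comap P.subtype) fun _ _ h => Submodule.comap_mono (hK h),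
    hMP (fun k => (K k).map P.mkQ) fun _ _ h => Submodule.map_mono (hK h)] with k hkP hkMP x hx
  obtain ⟨s, hs, y, hy, hyx⟩ := hkMP _ (Submodule.mem_map_of_mem hx)
  have hdiff : s • x - y ∈ P := by
    rw [← Submodule.Quotient.eq, eq_comm]
    exact hyx
  obtain ⟨t, ht, htx⟩ := hkP ⟨_, hdiff⟩ (sub_mem ((K k).smul_mem s hx) (hK k.le_succ hy))
  refine ⟨t * s, S.mul_mem ht hs, ?_⟩
  have htxy : t • (s • x - y) ∈ K (k + 1) := htx
  rwa [smul_sub, (K (k + 1)).sub_mem_iff_left ((K (k + 1)).smul_mem t hy), smul_smul] at htxy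

theorem exists_smul_mem_range (h : IsArtinianModTorsion S M) {f : M →ₗ[R] M} (hf : Injective f)
    (x : M) : ∃ s ∈ S, s • x ∈ f.range := by
  obtain ⟨k, hk⟩ := (h (fun k => f.iterateRange k) f.iterateRange.monotone.dual_right).exists
  obtain ⟨s, hs, y, hy⟩ := hk _ ⟨x, rfl⟩
  refine ⟨s, hs, y, ?_⟩
  refine Module.End.iterate_injective hf k ?_
  rw [map_smul, ← hy, pow_succ, Module.End.mul_apply]

theorem exists_mul_eq_mul (h : IsArtinianModTorsion S R) {c : R} (hc : c ∈ nonZeroDivisorsRight R)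
    (a : R) : ∃ d ∈ S, ∃ b, d * a = b * c := by
  obtain ⟨d, hd, b, hb⟩ := h.exists_smul_mem_range (f := LinearMap.toSpanSingleton R R c)
    ((injective_iff_map_eq_zero _).2 hc) a
  exact ⟨d, hd, b, hb.symm⟩

section SemiprimeQuotient

variable {A : Type*} [Ring A] {π : R →+* A}

theorem of_ker_le_annihilator [IsNoetherianRing A] [IsNoetherian R M] (hA : IsSemiprimeRing A)
    (hπ : Surjective π) (hM : RingHom.ker π ≤ Module.annihilator R M) :
    IsArtinianModTorsion (A⁰.comap π) M := fun K hK => by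
  filter_upwards [eventually_eq_bot_of_disjoint_succ hK] with k hk x hx
  let evalAt : R →ₗ[R] M := LinearMap.toSpanSingleton R M x
  let E : Ideal R := Submodule.comap evalAt (K (k + 1))
  have hess : IsEssential (E.map π) := fun J hJ => by
    have hJx : Submodule.map evalAt (J.comap π) = ⊥ := by
      refine hk _ (Submodule.map_le_iff_le_comap.2 fun r _ => (K k).smul_mem r hx)
        (Submodule.disjoint_def.2 ?_)
      rintro _ hrK ⟨r, hrJ, rfl⟩
      have hr : π r = 0 := Submodule.disjoint_def.1 hJ _ (Ideal.mem_map_of_mem π hrK) hrJ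
      exact Module.mem_annihilator.1 (hM hr) x
    have hJE : J.comap π ≤ E := Submodule.map_le_iff_le_comap.1 (hJx ▸ bot_le)
    rw [← Ideal.map_comap_of_surjective π hπ J] at hJ ⊢
    exact disjoint_self.1 (hJ.mono_left (Ideal.map_mono hJE))
  obtain ⟨c, hcE, hc⟩ := hA.exists_mem_nonZeroDivisors hess
  obtain ⟨s, hs, rfl⟩ := (Ideal.mem_map_iff_of_surjective π hπ).1 hcE
  exact ⟨s, hc, hs⟩

theorem of_ker_pow_le_annihilator [IsNoetherianRing A] [IsNoetherian R M] (hA : IsSemiprimeRing A)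
    (hπ : Surjective π) (k : ℕ) (hM : RingHom.ker π ^ k ≤ Module.annihilator R M) :
    IsArtinianModTorsion (A⁰.comap π) M := by
  induction k generalizing M with
  | zero =>
    rw [Submodule.pow_zero, Ideal.one_eq_top] at hM
    exact of_ker_le_annihilator hA hπ (le_top.trans hM)
  | succ k ih =>
    let P : Submodule R M := RingHom.ker π • ⊤
    have hP : RingHom.ker π ^ k ≤ Module.annihilator R P := by
      rw [← Submodule.annihilator_top, Submodule.le_annihilator_iff, Submodule.pow_succ] at hM
      exact Submodule.le_annihilator_iff.2 ((Submodule.mul_smul ..).symm.trans hM)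
    have hMP : RingHom.ker π ≤ Module.annihilator R (M ⧸ P) := fun r hr => by
      refine Module.mem_annihilator.2 fun y => ?_
      obtain ⟨x, rfl⟩ := P.mkQ_surjective y
      rw [← map_smul, Submodule.mkQ_apply, Submodule.Quotient.mk_eq_zero]
      exact Submodule.smul_mem_smul hr trivial
    exact of_quotient P (ih hP) (of_ker_le_annihilator hA hπ hMP)

theorem of_ker_eq_primeRadical [IsNoetherianRing R] [IsNoetherian R M] (hπ : Surjective π)
    (hker : RingHom.ker π = primeRadical R) : IsArtinianModTorsion (A⁰.comap π) M := by
  have := isNoetherianRing_of_surjective R A π hπ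
  obtain ⟨k, hk⟩ := isNilpotentIdeal_primeRadical R
  exact of_ker_pow_le_annihilator (isSemiprimeRing_of_ker_eq_primeRadical hπ hker) hπ (k + 1)
    (hker ▸ hk ▸ bot_le)

theorem map_mem_nonZeroDivisorsRight [IsNoetherianRing A] (h : IsArtinianModTorsion (A⁰.comap π) R)
    (hπ : Surjective π) {c : R} (hc : c ∈ nonZeroDivisorsRight R) :
    π c ∈ nonZeroDivisorsRight A := by
  intro x hx
  obtain ⟨x, rfl⟩ := hπ x
  obtain ⟨k, hk, hdisj⟩ :=
    ((eventually_ne_atTop 0).and (eventually_disjoint_span_torsionOf_pow (π c))).exists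
  obtain ⟨d, hd, y, hdx⟩ := h.exists_mul_eq_mul (pow_mem hc k) x
  have htorsion : π d * π x ∈ Ideal.torsionOf A A (π c) := by
    rw [Ideal.mem_torsionOf_iff, smul_eq_mul, mul_assoc, hx, mul_zero]
  have hspan : π d * π x ∈ Ideal.span {π c ^ k} :=
    Ideal.mem_span_singleton'.2 ⟨π y, by rw [← map_mul, hdx, map_mul, map_pow]⟩
  exact hd.1 _ (Submodule.disjoint_def.1 hdisj _ hspan (torsionOf_le_torsionOf_pow hk htorsion))

end SemiprimeQuotient

end IsArtinianModTorsion

/-! ### Left quotient rings -/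

theorem nonempty_leftQuotData_of_ore {R : Type u} [Ring R]
    (hore : ∀ a : R, ∀ c ∈ R⁰, ∃ d ∈ R⁰, ∃ b, d * a = b * c) : Nonempty (LeftQuotData R) := by
  choose! d hd b hdb using hore
  let _ : OreLocalization.OreSet R⁰ :=
    { ore_right_cancel := fun r₁ r₂ s hs => ⟨1, by
        rw [sub_eq_zero.1 (s.2.2 (r₁ - r₂) (by rw [sub_mul, hs, sub_self]))]⟩
      oreNum := fun r s => b r s
      oreDenom := fun r s => ⟨d r s, hd r s s.2⟩
      ore_eq := fun r s => hdb r s s.2 }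
  refine ⟨⟨OreLocalization R⁰ R, OreLocalization.numeratorRingHom,
    OreLocalization.numeratorHom_inj fun c hc => hc.1,
    fun c hc => OreLocalization.numerator_isUnit (S := R⁰) ⟨c, hc⟩, fun q => ?_⟩⟩
  induction q using OreLocalization.ind with
  | _ r s => exact ⟨s, r, s.2, OreLocalization.mul_cancel⟩

theorem mem_of_mul_mem_of_forall_mul_mem {S : Type*} [Ring S] [IsArtinianRing S] {J : Ideal S}
    {u : S} (hu : u ∈ nonZeroDivisorsRight S) (hJ : ∀ q ∈ J, q * u ∈ J) {q : S} (hq : q * u ∈ J) :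
    q ∈ J := by
  let f : J →ₗ[S] J := (LinearMap.toSpanSingleton S S u).restrict hJ
  have hf : Injective f := (injective_iff_map_eq_zero f).2 fun x hx =>
    Subtype.ext (hu _ (congrArg Subtype.val hx))
  obtain ⟨⟨p, hp⟩, hpq⟩ := IsArtinian.surjective_of_injective_endomorphism f hf ⟨q * u, hq⟩
  have hmul : p * u = q * u := congrArg Subtype.val hpq
  have hsub : p - q = 0 := hu _ (by rw [sub_mul, hmul, sub_self])
  rwa [← sub_eq_zero.1 hsub]

namespace IsLeftQuotRing

variable {R : Type u} {Q : Type v} [Ring R] [Ring Q] {φ : R →+* Q}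

theorem exists_mul_eq_mul (h : IsLeftQuotRing φ) (a : R) {c : R} (hc : c ∈ R⁰) :
    ∃ d ∈ R⁰, ∃ b, d * a = b * c := by
  obtain ⟨u, hu⟩ := h.isUnit c hc
  obtain ⟨d, b, hd, hdb⟩ := h.denom (φ a * ↑u⁻¹)
  refine ⟨d, hd, b, h.inj ?_⟩
  rw [← mul_assoc, Units.mul_inv_eq_iff_eq_mul, hu] at hdb
  rw [map_mul, map_mul, hdb]

theorem mem_of_map_mul_mem (h : IsLeftQuotRing φ) {c : R} (hc : c ∈ R⁰) {J : Ideal Q} {q : Q}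
    (hq : φ c * q ∈ J) : q ∈ J :=
  (J.unit_mul_mem_iff_mem (h.isUnit c hc)).1 hq

theorem mem_map_iff (h : IsLeftQuotRing φ) {I : Ideal R} {q : Q} :
    q ∈ I.map φ ↔ ∃ c ∈ R⁰, ∃ a ∈ I, φ c * q = φ a := by
  refine ⟨fun hq => ?_, fun ⟨c, hc, a, ha, hca⟩ =>
    h.mem_of_map_mul_mem hc (hca ▸ Ideal.mem_map_of_mem φ ha)⟩
  induction hq using Submodule.span_induction with
  | mem q hq =>
    obtain ⟨a, ha, rfl⟩ := hq
    exact ⟨1, one_mem _, a, ha, by simp⟩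
  | zero => exact ⟨1, one_mem _, 0, zero_mem _, by simp⟩
  | add p q _ _ hp hq =>
    obtain ⟨c, hc, a, ha, hca⟩ := hp
    obtain ⟨d, hd, b, hb, hdb⟩ := hq
    obtain ⟨s, hs, t, hst⟩ := h.exists_mul_eq_mul c hd
    refine ⟨s * c, mul_mem hs hc, s * a + t * b,
      add_mem (I.mul_mem_left s ha) (I.mul_mem_left t hb), ?_⟩
    rw [mul_add, map_add]
    congr 1
    · rw [map_mul, map_mul, mul_assoc, hca]
    · rw [hst, map_mul, map_mul, mul_assoc, hdb]
  | smul p q _ hq =>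
    obtain ⟨c, hc, a, ha, hca⟩ := hq
    obtain ⟨d, r, hd, hdr⟩ := h.denom p
    obtain ⟨s, hs, t, hst⟩ := h.exists_mul_eq_mul r hc
    refine ⟨s * d, mul_mem hs hd, t * a, I.mul_mem_left t ha, ?_⟩
    rw [smul_eq_mul, map_mul, mul_assoc, ← mul_assoc (φ d), hdr, ← mul_assoc, ← map_mul, hst,
      map_mul, map_mul, mul_assoc, hca]

theorem map_mem_map_iff (h : IsLeftQuotRing φ) {I : Ideal R} {x : R} :
    φ x ∈ I.map φ ↔ ∃ c ∈ R⁰, c * x ∈ I := by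
  simp only [h.mem_map_iff, ← map_mul, h.inj.eq_iff, exists_eq_right']

theorem isArtinianRing (h : IsLeftQuotRing φ) (hR : IsArtinianModTorsion R⁰ R) :
    IsArtinianRing Q := by
  refine monotone_stabilizes_iff_artinian.1 fun J => ?_
  obtain ⟨N, hN⟩ := eventually_atTop.1
    (hR (fun k => Ideal.comap φ (J k)) fun _ _ hkl => Ideal.comap_mono (J.monotone hkl))
  have hsucc (k : ℕ) (hk : N ≤ k) : (J k).ofDual ≤ (J (k + 1)).ofDual := fun q hq => by
    obtain ⟨c, r, hc, hcr⟩ := h.denom q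
    have hr : r ∈ Ideal.comap φ (J k).ofDual := by
      rw [Ideal.mem_comap, ← hcr]
      exact Ideal.mul_mem_left _ _ hq
    obtain ⟨s, hs, hsr⟩ := hN k hk r hr
    have hsr : φ (s * r) ∈ (J (k + 1)).ofDual := hsr
    rw [map_mul, ← hcr] at hsr
    exact h.mem_of_map_mul_mem hc (h.mem_of_map_mul_mem hs hsr)
  refine ⟨N, fun m hm => ?_⟩
  induction m, hm using Nat.le_induction with
  | base => rfl
  | succ k hk ih => exact ih.trans (le_antisymm (J.monotone k.le_succ) (hsucc k hk))

theorem fMk_eq_zero_iff {A : Type*} [Ring A] {π : R →+* A} (h : IsLeftQuotRing φ)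
    (hreg : ∀ c, π c ∈ A⁰ ↔ c ∈ R⁰) {i : ℕ} {x : R} (hx : x ∈ primeRadical R ^ i) :
    fMk π i x hx = 0 ↔ φ x ∈ (primeRadical R ^ (i + 1)).map φ := by
  let N : Submodule R ↥(primeRadical R ^ i) :=
    Submodule.comap (primeRadical R ^ i).subtype (primeRadical R ^ (i + 1))
  let L : Submodule R ↥(primeRadical R ^ i) := Submodule.comap (primeRadical R ^ i).subtype
    (((primeRadical R ^ (i + 1)).map φ).comap φ)
  have hNL : N ≤ L := Submodule.comap_mono Ideal.le_comap_map
  have hτ : tauSub π i = L.map N.mkQ := by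
    refine le_antisymm (Submodule.span_le.2 ?_) ?_
    · rintro u ⟨c, hc, hcu⟩
      obtain ⟨y, rfl⟩ := N.mkQ_surjective u
      rw [← map_smul, Submodule.mkQ_apply, Submodule.Quotient.mk_eq_zero] at hcu
      exact ⟨y, h.map_mem_map_iff.2 ⟨c, (hreg c).1 hc, hcu⟩, rfl⟩
    · rintro _ ⟨y, hy, rfl⟩
      obtain ⟨c, hc, hcy⟩ := h.map_mem_map_iff.1 hy
      refine Submodule.subset_span ⟨c, (hreg c).2 hc, ?_⟩
      rw [← map_smul, Submodule.mkQ_apply, Submodule.Quotient.mk_eq_zero]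
      exact hcy
  rw [fMk, Submodule.Quotient.mk_eq_zero, hτ]
  change (⟨x, hx⟩ : ↥(primeRadical R ^ i)) ∈ (L.map N.mkQ).comap N.mkQ ↔ _
  rw [Submodule.comap_map_mkQ, sup_eq_right.2 hNL]
  rfl

variable [IsArtinianRing Q]

theorem isTwoSided_map (h : IsLeftQuotRing φ) (I : Ideal R) [I.IsTwoSided] :
    (I.map φ).IsTwoSided := by
  have hR (r : R) (q : Q) (hq : q ∈ I.map φ) : q * φ r ∈ I.map φ := by
    obtain ⟨c, hc, a, ha, hca⟩ := h.mem_map_iff.1 hq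
    exact h.mem_map_iff.2 ⟨c, hc, a * r, I.mul_mem_right r ha, by rw [← mul_assoc, hca, map_mul]⟩
  refine ⟨fun {q} p hq => ?_⟩
  obtain ⟨d, r, hd, hdr⟩ := h.denom p
  obtain ⟨u, hu⟩ := h.isUnit d hd
  have hqu : q * ↑u⁻¹ ∈ I.map φ := mem_of_mul_mem_of_forall_mul_mem
    (h.isUnit d hd).mem_nonZeroDivisors.2 (hR d) (by rwa [← hu, Units.inv_mul_cancel_right])
  have hp : q * p = q * ↑u⁻¹ * φ r := by
    rw [← hdr, ← hu, mul_assoc, Units.inv_mul_cancel_left]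
  exact hp ▸ hR r _ hqu

theorem mul_mem_map_mul (h : IsLeftQuotRing φ) {I K : Ideal R} [I.IsTwoSided] {p q : Q}
    (hp : p ∈ I.map φ) (hq : q ∈ K.map φ) : p * q ∈ (I * K).map φ := by
  have := h.isTwoSided_map I
  obtain ⟨d, hd, b, hb, hdb⟩ := h.mem_map_iff.1 hq
  obtain ⟨u, hu⟩ := h.isUnit d hd
  obtain ⟨c, hc, a, ha, hca⟩ := h.mem_map_iff.1 (Ideal.mul_mem_right (↑u⁻¹ : Q) _ hp)
  refine h.mem_map_iff.2 ⟨c, hc, a * b, Ideal.mul_mem_mul ha hb, ?_⟩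
  rw [map_mul, ← hca, ← hdb, ← hu]
  simp only [mul_assoc, Units.inv_mul_cancel_left]

theorem isNilpotent_of_mem_map (h : IsLeftQuotRing φ) {I : Ideal R} [I.IsTwoSided] {k : ℕ}
    (hI : I ^ k = ⊥) {q : Q} (hq : q ∈ I.map φ) : IsNilpotent q := by
  have hpow (m : ℕ) : q ^ m ∈ (I ^ m).map φ := by
    induction m with
    | zero => simp [Submodule.pow_zero, Ideal.one_eq_top, Ideal.map_top]
    | succ m ih =>
      rw [pow_succ, Submodule.pow_succ]
      exact h.mul_mem_map_mul ih hq
  exact ⟨k, by simpa [hI, Ideal.map_bot] using hpow k⟩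

theorem isUnit_map_of_isNilpotentIdeal (h : IsLeftQuotRing φ) {I : Ideal R} [I.IsTwoSided]
    (hI : IsNilpotentIdeal I) {c : R} (hc : ∀ x, x * c ∈ I → x ∈ I) : IsUnit (φ c) := by
  have := h.isTwoSided_map I
  let J : Ideal Q := I.map φ
  let f : (Q ⧸ J) →ₗ[Q] Q ⧸ J := Submodule.mapQ J J (LinearMap.toSpanSingleton Q Q (φ c))
    fun q hq => J.mul_mem_right (φ c) hq
  have hf : Injective f := by
    refine (injective_iff_map_eq_zero f).2 fun y hy => ?_
    obtain ⟨q, rfl⟩ := Submodule.Quotient.mk_surjective J y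
    have hqc : q * φ c ∈ J := (Submodule.Quotient.mk_eq_zero J).1 hy
    obtain ⟨d, r, hd, hdr⟩ := h.denom q
    have hrc : φ (r * c) ∈ J := by
      rw [map_mul, ← hdr, mul_assoc]
      exact J.mul_mem_left _ hqc
    obtain ⟨e, he, herc⟩ := h.map_mem_map_iff.1 hrc
    rw [← mul_assoc] at herc
    have hr : φ r ∈ J := h.map_mem_map_iff.2 ⟨e, he, hc _ herc⟩
    exact (Submodule.Quotient.mk_eq_zero J).2 (h.mem_of_map_mul_mem hd (hdr ▸ hr))
  obtain ⟨y, hy⟩ := IsArtinian.surjective_of_injective_endomorphism f hf (Submodule.Quotient.mk 1)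
  obtain ⟨q, rfl⟩ := Submodule.Quotient.mk_surjective J y
  have hqc : q * φ c - 1 ∈ J := (Submodule.Quotient.eq J).1 hy
  obtain ⟨k, hk⟩ := hI
  have hunit : IsUnit (q * φ c) := by
    simpa using (h.isNilpotent_of_mem_map hk hqc).isUnit_add_one
  exact isUnit_of_mul_isUnit_right hunit

theorem mem_nonZeroDivisors_of_isNilpotentIdeal (h : IsLeftQuotRing φ) {I : Ideal R} [I.IsTwoSided]
    (hI : IsNilpotentIdeal I) {c : R} (hc : ∀ x, x * c ∈ I → x ∈ I) : c ∈ R⁰ :=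
  mem_nonZeroDivisors_of_injective h.inj
    (h.isUnit_map_of_isNilpotentIdeal hI hc).mem_nonZeroDivisors

theorem fMk_eq_zero_of_fMk_mul_eq_zero {A : Type*} [Ring A] {π : R →+* A} (h : IsLeftQuotRing φ)
    (hreg : ∀ c, π c ∈ A⁰ ↔ c ∈ R⁰) {i : ℕ} {c x : R} (hc : c ∈ R⁰)
    (hx : x ∈ primeRadical R ^ i) (hxc : x * c ∈ primeRadical R ^ i)
    (hfx : fMk π i (x * c) hxc = 0) : fMk π i x hx = 0 := by
  rw [h.fMk_eq_zero_iff hreg] at hfx ⊢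
  have := h.isTwoSided_map (primeRadical R ^ (i + 1))
  obtain ⟨u, hu⟩ := h.isUnit c hc
  simpa [← hu] using Ideal.mul_mem_right (↑u⁻¹ : Q) _ hfx

end IsLeftQuotRing

/-! ### The criterion -/

theorem noInfiniteIndepFamily_of_isNoetherian (R M : Type*) [Ring R] [AddCommGroup M] [Module R M]
    [IsNoetherian R M] : NoInfiniteIndepFamily R M := by
  rintro ⟨f, hne, hind⟩
  have hfin : {i | f i ≠ ⊥}.Finite := WellFoundedGT.finite_ne_bot_of_iSupIndep hind
  exact Set.infinite_univ (hfin.subset fun i _ => hne i)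

theorem accLeftAnnihilators_of_isNoetherianRing (R : Type*) [Ring R] [IsNoetherianRing R] :
    ACCLeftAnnihilators R := by
  intro f hf hmono
  have hideal (i : ℕ) : ∃ I : Ideal R, (I : Set R) = f i := by
    obtain ⟨S, hS⟩ := hf i
    refine ⟨⨅ s ∈ S, Ideal.torsionOf R R s, ?_⟩
    ext r
    simp [hS]
  choose I hI using hideal
  obtain ⟨N, hN⟩ := monotone_stabilizes_iff_noetherian.2 ‹IsNoetherianRing R›
    ⟨I, fun i j hij => by
      rw [← SetLike.coe_subset_coe, hI, hI]
      exact hmono i j hij⟩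
  exact ⟨N, fun k hk => by rw [← hI, ← hI, ← show I N = I k from hN k hk]⟩

theorem isLeftGoldie_of_isNoetherianRing (R : Type*) [Ring R] [IsNoetherianRing R] :
    IsLeftGoldie R :=
  ⟨accLeftAnnihilators_of_isNoetherianRing R, noInfiniteIndepFamily_of_isNoetherian R R⟩

section PrimeRadicalQuotient

variable {R A : Type*} [Ring R] [IsNoetherianRing R] [Ring A] {π : R →+* A}

theorem map_mem_nonZeroDivisors_of_ker_eq_primeRadical (hπ : Surjective π)
    (hker : RingHom.ker π = primeRadical R) {c : R} (hc : c ∈ R⁰) : π c ∈ A⁰ := by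
  have := isNoetherianRing_of_surjective R A π hπ
  have hR : IsArtinianModTorsion (A⁰.comap π) R := .of_ker_eq_primeRadical hπ hker
  have hA : IsSemiprimeRing A := isSemiprimeRing_of_ker_eq_primeRadical hπ hker
  exact hA.mem_nonZeroDivisors_of_mem_nonZeroDivisorsRight
    (hR.map_mem_nonZeroDivisorsRight hπ hc.2)

theorem IsLeftQuotRing.mem_nonZeroDivisors_of_map_mem {Q : Type*} [Ring Q] [IsArtinianRing Q]
    {φ : R →+* Q} (h : IsLeftQuotRing φ) (hker : RingHom.ker π = primeRadical R) {c : R}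
    (hc : π c ∈ nonZeroDivisorsRight A) : c ∈ R⁰ := by
  refine h.mem_nonZeroDivisors_of_isNilpotentIdeal (isNilpotentIdeal_primeRadical R) fun x hx => ?_
  rw [← hker, RingHom.mem_ker, map_mul] at hx
  exact hker ▸ hc _ hx

end PrimeRadicalQuotient

theorem left_noetherian_left_artinian_left_quotient_ring_criterion_general
    {R : Type u} [Ring R] [IsNoetherianRing R] {Rbar : Type*} [Ring Rbar] {π : R →+* Rbar}
    (hπsurj : Surjective π) (hπker : RingHom.ker π = primeRadical R) :
    HasArtinianLeftQuot R ↔ regSet R = {c : R | IsRegElem (π c)} := by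
  constructor
  · rintro ⟨⟨Q, φ, h⟩, _ : IsArtinianRing Q⟩
    exact Set.Subset.antisymm
      (fun c hc => map_mem_nonZeroDivisors_of_ker_eq_primeRadical hπsurj hπker hc)
      fun c hc => h.mem_nonZeroDivisors_of_map_mem hπker hc.2
  · intro hreg
    have hR : IsArtinianModTorsion R⁰ R :=
      (IsArtinianModTorsion.of_ker_eq_primeRadical hπsurj hπker).mono hreg.ge
    obtain ⟨Q, φ, h⟩ := nonempty_leftQuotData_of_ore fun a c hc => hR.exists_mul_eq_mul hc.2 a
    exact ⟨⟨Q, φ, h⟩, h.isArtinianRing hR⟩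

/-- **Corollary (`A3Sep12`).** Let `R` be a left Noetherian ring, `n` its prime radical,
`R̄ = R/n` (realized by a surjective `π` with kernel `n`).  Then `R` has a left Artinian
left quotient ring iff `R` is `n`-reflective (`C' = C`) and
(a) `R̄` is a left Goldie ring, (b) `n` is a nilpotent ideal,
(d) for every `1 ≤ i ≤ ν` the left `R̄`-module `f_i` contains no infinite direct sum of
nonzero submodules (the range `1 ≤ i ≤ ν` is encoded as `1 ≤ i` and `n^i ≠ ⊥`), and
(e) for every `c̄ ∈ C̄` right multiplication by `c̄` on `f_i` is injective. -/
theorem left_noetherian_left_artinian_left_quotient_ring_criterion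
    {R : Type u} [Ring R] [IsNoetherianRing R] (Rbar : Type v) [Ring Rbar] (π : R →+* Rbar)
    (hπsurj : Function.Surjective π) (hπker : RingHom.ker π = primeRadical R) :
    HasArtinianLeftQuot R ↔
      ((regSet R = {c : R | IsRegElem (π c)}) ∧
        IsLeftGoldie Rbar ∧
        IsNilpotentIdeal (primeRadical R) ∧
        (∀ i : ℕ, 1 ≤ i → primeRadical R ^ i ≠ ⊥ → NoInfiniteIndepFamily R (fMod π i)) ∧
        (∀ i : ℕ, 1 ≤ i → primeRadical R ^ i ≠ ⊥ →
          ∀ c : R, IsRegElem (π c) →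
            ∀ (x : R) (hx : x ∈ primeRadical R ^ i) (hxc : x * c ∈ primeRadical R ^ i),
              fMk π i (x * c) hxc = 0 → fMk π i x hx = 0)) := by
  have criterion := left_noetherian_left_artinian_left_quotient_ring_criterion_general hπsurj hπker
  refine criterion.trans (and_iff_left_of_imp fun hreg => ?_).symm
  have := isNoetherianRing_of_surjective R Rbar π hπsurj
  obtain ⟨⟨Q, φ, h⟩, _ : IsArtinianRing Q⟩ := criterion.2 hreg
  have hreg_iff (c : R) : IsRegElem (π c) ↔ IsRegElem c := (Set.ext_iff.1 hreg c).symm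
  exact ⟨isLeftGoldie_of_isNoetherianRing Rbar, isNilpotentIdeal_primeRadical R,
    fun i _ _ => noInfiniteIndepFamily_of_isNoetherian R (fMod π i),
    fun i _ _ c hc x hx hxc => h.fMk_eq_zero_of_fMk_mul_eq_zero hreg_iff ((hreg_iff c).1 hc) hx hxc⟩
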